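/- Separation theorem, converse part under the channel strong converse property (Theorem 6.5, part 2, channel version, spectral form). Let V = {Vⁿ} be a general source and W = {Wⁿ} a general channel satisfying sup_X I_(X;Y) = sup_X Ī(X;Y), where the suprema are over all channel inputs X = {Xⁿ}. If V is transmissible over W, then H̄(V) ≤ sup_X I_(X;Y). -/

import Mathlib

open Filter Real Topology

namespace ISC

/-- Words of length `n` over alphabet `A`. -/
abbrev Word (A : Type*) (n : ℕ) : Type _ := Fin n → A

/-- `p` is a probability mass function. -/
def IsPMF {α : Type*} (p : α → ℝ) : Prop :=
  (∀ a, 0 ≤ p a) ∧ HasSum p 1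

/-- Probability of the event `S` under the pmf `p`. -/
noncomputable def prob {α : Type*} (p : α → ℝ) (S : Set α) : ℝ :=
  ∑' a, S.indicator p a

/-- Output marginal `P_{Yⁿ}` of the channel `W` fed with the joint input law `P_{VⁿXⁿ}`. -/
noncomputable def outDist {𝒱 𝒳 𝒴 : Type*} {n : ℕ}
    (PVX : Word 𝒱 n × Word 𝒳 n → ℝ) (W : Word 𝒳 n → Word 𝒴 n → ℝ)
    (y : Word 𝒴 n) : ℝ :=
  ∑' vx : Word 𝒱 n × Word 𝒳 n, PVX vx * W vx.2 y

/-- Joint law of `(Vⁿ, Xⁿ, Yⁿ)`: `P_{VⁿXⁿ}(v,x) · Wⁿ(y|x)`. -/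
noncomputable def jointLaw {𝒱 𝒳 𝒴 : Type*} {n : ℕ}
    (PVX : Word 𝒱 n × Word 𝒳 n → ℝ) (W : Word 𝒳 n → Word 𝒴 n → ℝ) :
    Word 𝒱 n × Word 𝒳 n × Word 𝒴 n → ℝ :=
  fun z => PVX (z.1, z.2.1) * W z.2.1 z.2.2

/-- The joint input law `P_{VⁿXⁿ}` induced by the deterministic encoder `φ`:
`P_{Vⁿ}(v) 1{x = φ(v)}`. -/
noncomputable def codeInput {𝒱 𝒳 : Type*} [DecidableEq 𝒳] {n : ℕ} (PV : Word 𝒱 n → ℝ)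
    (φ : Word 𝒱 n → Word 𝒳 n) : Word 𝒱 n × Word 𝒳 n → ℝ :=
  fun vx => if vx.2 = φ vx.1 then PV vx.1 else 0

/-- Error probability `εₙ` of the joint source-channel code `(φ, ψ)`. -/
noncomputable def errProb {𝒱 𝒳 𝒴 : Type*} {n : ℕ}
    (PV : Word 𝒱 n → ℝ) (W : Word 𝒳 n → Word 𝒴 n → ℝ)
    (φ : Word 𝒱 n → Word 𝒳 n) (ψ : Word 𝒴 n → Word 𝒱 n) : ℝ :=
  ∑' v, PV v * prob (W (φ v)) {y | ψ y ≠ v}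

/-- `V` is transmissible over `W`. -/
def Transmissible {𝒱 𝒳 𝒴 : Type*} (PV : (n : ℕ) → Word 𝒱 n → ℝ)
    (W : (n : ℕ) → Word 𝒳 n → Word 𝒴 n → ℝ) : Prop :=
  ∃ (φ : (n : ℕ) → Word 𝒱 n → Word 𝒳 n) (ψ : (n : ℕ) → Word 𝒴 n → Word 𝒱 n),
    Tendsto (fun n => errProb (PV n) (W n) (φ n) (ψ n)) atTop (nhds 0)

/-- Output marginal of the channel `W` for an input distribution `P_{Xⁿ}`. -/
noncomputable def outDistX {𝒳 𝒴 : Type*} {n : ℕ}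
    (PX : Word 𝒳 n → ℝ) (W : Word 𝒳 n → Word 𝒴 n → ℝ) (y : Word 𝒴 n) : ℝ :=
  ∑' x : Word 𝒳 n, PX x * W x y

/-- Joint law of `(Xⁿ, Yⁿ)`: `P_{Xⁿ}(x) · Wⁿ(y|x)`. -/
noncomputable def jointXY {𝒳 𝒴 : Type*} {n : ℕ}
    (PX : Word 𝒳 n → ℝ) (W : Word 𝒳 n → Word 𝒴 n → ℝ) :
    Word 𝒳 n × Word 𝒴 n → ℝ :=
  fun z => PX z.1 * W z.1 z.2

/-- Limit superior in probability of a sequence of random variables `Z i`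
distributed according to the pmfs `p i`. -/
noncomputable def plimsup {α : ℕ → Type*} (p : (i : ℕ) → α i → ℝ)
    (Z : (i : ℕ) → α i → ℝ) : EReal :=
  sInf {β : EReal |
    Tendsto (fun i => prob (p i) {a | β < (Z i a : EReal)}) atTop (nhds 0)}

/-- Limit inferior in probability of a sequence of random variables `Z i`
distributed according to the pmfs `p i`. -/
noncomputable def pliminf {α : ℕ → Type*} (p : (i : ℕ) → α i → ℝ)
    (Z : (i : ℕ) → α i → ℝ) : EReal :=
  sSup {β : EReal |
    Tendsto (fun i => prob (p i) {a | (Z i a : EReal) < β}) atTop (nhds 0)}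

/-- Spectral sup-entropy rate `H̄(V)`. -/
noncomputable def Hbar {𝒱 : Type*} (PV : (n : ℕ) → Word 𝒱 n → ℝ) : EReal :=
  plimsup (fun n => PV n) (fun n v => (1 / (n : ℝ)) * Real.log (1 / PV n v))

/-- Spectral inf-entropy rate `H_(V)`. -/
noncomputable def Hlow {𝒱 : Type*} (PV : (n : ℕ) → Word 𝒱 n → ℝ) : EReal :=
  pliminf (fun n => PV n) (fun n v => (1 / (n : ℝ)) * Real.log (1 / PV n v))

/-- Spectral inf-information rate `I_(X;Y)` of the channel `W` with input `X`. -/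
noncomputable def Ilow {𝒳 𝒴 : Type*} (PX : (n : ℕ) → Word 𝒳 n → ℝ)
    (W : (n : ℕ) → Word 𝒳 n → Word 𝒴 n → ℝ) : EReal :=
  pliminf (fun n => jointXY (PX n) (W n))
    (fun n z => (1 / (n : ℝ)) * Real.log (W n z.1 z.2 / outDistX (PX n) (W n) z.2))

/-- Spectral sup-information rate `Ī(X;Y)` of the channel `W` with input `X`. -/
noncomputable def Ihigh {𝒳 𝒴 : Type*} (PX : (n : ℕ) → Word 𝒳 n → ℝ)
    (W : (n : ℕ) → Word 𝒳 n → Word 𝒴 n → ℝ) : EReal :=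
  plimsup (fun n => jointXY (PX n) (W n))
    (fun n z => (1 / (n : ℝ)) * Real.log (W n z.1 z.2 / outDistX (PX n) (W n) z.2))

/-- `sup_X I_(X;Y)`: the supremum over all channel inputs. -/
noncomputable def supIlow {𝒳 𝒴 : Type*}
    (W : (n : ℕ) → Word 𝒳 n → Word 𝒴 n → ℝ) : EReal :=
  ⨆ PX : {PX : (n : ℕ) → Word 𝒳 n → ℝ // ∀ n, IsPMF (PX n)}, Ilow PX.1 W



open scoped ENNReal

theorem ofReal_prob {α : Type*} {p : α → ℝ} (h0 : ∀ a, 0 ≤ p a) (hs : Summable p) (S : Set α) :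
    ENNReal.ofReal (prob p S) = ∑' a, S.indicator (fun a => ENNReal.ofReal (p a)) a := by
  unfold prob
  rw [ENNReal.ofReal_tsum_of_nonneg (fun a => Set.indicator_nonneg (fun a _ => h0 a) a)
    (hs.indicator S)]
  refine tsum_congr fun a => ?_
  by_cases h : a ∈ S <;> simp [h]

theorem IsPMF.tsum_ofReal {α : Type*} {p : α → ℝ} (h : IsPMF p) :
    ∑' a, ENNReal.ofReal (p a) = 1 := by
  rw [← ENNReal.ofReal_tsum_of_nonneg h.1 h.2.summable, h.2.tsum_eq, ENNReal.ofReal_one]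

theorem isPMF_of_ofReal {α : Type*} {p : α → ℝ} (h0 : ∀ a, 0 ≤ p a)
    (h : ∑' a, ENNReal.ofReal (p a) = 1) : IsPMF p := by
  refine ⟨h0, ?_⟩
  have hs : Summable p := by
    have := ENNReal.summable_toReal (f := fun a => ENNReal.ofReal (p a)) (by rw [h]; simp)
    simpa [ENNReal.toReal_ofReal, h0] using this
  have h2 := ENNReal.ofReal_tsum_of_nonneg h0 hs
  rw [h] at h2
  have : ∑' a, p a = 1 := by simpa using h2
  rw [← this]; exact hs.hasSum

theorem prob_nonneg {α : Type*} {p : α → ℝ} (h0 : ∀ a, 0 ≤ p a) (S : Set α) : 0 ≤ prob p S :=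
  tsum_nonneg fun a => Set.indicator_nonneg (fun a _ => h0 a) a

theorem prob_mono {α : Type*} {p : α → ℝ} (h0 : ∀ a, 0 ≤ p a) (hs : Summable p) {S T : Set α}
    (h : S ⊆ T) : prob p S ≤ prob p T :=
  (hs.indicator S).tsum_le_tsum
    (fun a => Set.indicator_le_indicator_of_subset h h0 a) (hs.indicator T)

theorem IsPMF.prob_le_one {α : Type*} {p : α → ℝ} (h : IsPMF p) (S : Set α) : prob p S ≤ 1 := by
  rw [← h.2.tsum_eq]
  exact (h.2.summable.indicator S).tsum_le_tsum
    (fun a => Set.indicator_le_self' (fun a _ => h.1 a) a) h.2.summable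

theorem IsPMF.le_one {α : Type*} {p : α → ℝ} (h : IsPMF p) (a : α) : p a ≤ 1 :=
  le_hasSum h.2 a (fun b _ => h.1 b)

/-- Push-forward pmf. -/
noncomputable def pushPMF {α β : Type*} (p : α → ℝ) (f : α → β) (x : β) : ℝ :=
  prob p {v | f v = x}

theorem tsum_push {α β : Type*} {p : α → ℝ} (h : IsPMF p) (f : α → β) (g : β → ℝ≥0∞) :
    ∑' x, ENNReal.ofReal (pushPMF p f x) * g x = ∑' v, ENNReal.ofReal (p v) * g (f v) := by
  classical
  simp only [pushPMF, ofReal_prob h.1 h.2.summable, ← ENNReal.tsum_mul_right]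
  rw [ENNReal.tsum_comm]
  refine tsum_congr fun v => ?_
  rw [tsum_eq_single (f v)]
  · simp
  · intro x hx
    simp [Set.indicator, Ne.symm hx]

theorem isPMF_push {α β : Type*} {p : α → ℝ} (h : IsPMF p) (f : α → β) :
    IsPMF (pushPMF p f) := by
  refine isPMF_of_ofReal (fun x => prob_nonneg h.1 _) ?_
  have := tsum_push h f (fun _ => 1)
  simpa [h.tsum_ofReal] using this

theorem isPMF_joint {𝒳 𝒴 : Type*} {n : ℕ} {PX : Word 𝒳 n → ℝ} {W : Word 𝒳 n → Word 𝒴 n → ℝ}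
    (hX : IsPMF PX) (hW : ∀ x, IsPMF (W x)) : IsPMF (jointXY PX W) := by
  refine isPMF_of_ofReal (fun z => mul_nonneg (hX.1 _) ((hW _).1 _)) ?_
  rw [ENNReal.tsum_prod']
  simp only [jointXY, ENNReal.ofReal_mul (hX.1 _), ENNReal.tsum_mul_left, (hW _).tsum_ofReal,
    mul_one, hX.tsum_ofReal]

theorem ofReal_out {𝒳 𝒴 : Type*} {n : ℕ} {PX : Word 𝒳 n → ℝ} {W : Word 𝒳 n → Word 𝒴 n → ℝ}
    (hX : IsPMF PX) (hW : ∀ x, IsPMF (W x)) (y : Word 𝒴 n) :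
    ENNReal.ofReal (outDistX PX W y) =
      ∑' x, ENNReal.ofReal (PX x) * ENNReal.ofReal (W x y) := by
  unfold outDistX
  rw [ENNReal.ofReal_tsum_of_nonneg (fun x => mul_nonneg (hX.1 _) ((hW _).1 _))]
  · simp only [ENNReal.ofReal_mul (hX.1 _)]
  · exact hX.2.summable.of_nonneg_of_le (fun x => mul_nonneg (hX.1 _) ((hW _).1 _))
      (fun x => mul_le_of_le_one_right (hX.1 _) ((hW x).le_one y))

theorem key_bound {𝒱 𝒳 𝒴 : Type*} {n : ℕ} (hn : 0 < n) {PV : Word 𝒱 n → ℝ} (hV : IsPMF PV)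
    {W : Word 𝒳 n → Word 𝒴 n → ℝ} (hW : ∀ x, IsPMF (W x))
    (φ : Word 𝒱 n → Word 𝒳 n) (ψ : Word 𝒴 n → Word 𝒱 n) (b z : ℝ) :
    prob PV {v | z < (1 / (n : ℝ)) * Real.log (1 / PV v)} ≤
      Real.exp (-(n * (z - b))) +
      prob (jointXY (pushPMF PV φ) W) {a | b < (1 / (n : ℝ)) *
        Real.log (W a.1 a.2 / outDistX (pushPMF PV φ) W a.2)} +
      errProb PV W φ ψ := by
  classical
  have hX := isPMF_push hV φ
  set PX := pushPMF PV φ with hPX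
  have hJ := isPMF_joint hX hW
  set A : Set (Word 𝒱 n) := {v | z < (1 / (n : ℝ)) * Real.log (1 / PV v)} with hA
  set B : Set (Word 𝒳 n × Word 𝒴 n) := {a | b < (1 / (n : ℝ)) *
        Real.log (W a.1 a.2 / outDistX PX W a.2)} with hB
  set P : Word 𝒱 n → ℝ≥0∞ := fun v => ENNReal.ofReal (PV v) with hP
  set w : Word 𝒳 n → Word 𝒴 n → ℝ≥0∞ := fun x y => ENNReal.ofReal (W x y) with hw
  set Q : Word 𝒴 n → ℝ≥0∞ := fun y => ENNReal.ofReal (outDistX PX W y) with hQ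
  have hw1 : ∀ x, ∑' y, w x y = 1 := fun x => (hW x).tsum_ofReal
  have hQ' : ∀ y, Q y = ∑' v, P v * w (φ v) y := by
    intro y
    simp only [hQ, ofReal_out hX hW]
    exact tsum_push hV φ (fun x => w x y)
  have hQ1 : ∑' y, Q y = 1 := by
    simp only [hQ']
    rw [ENNReal.tsum_comm]
    simp only [ENNReal.tsum_mul_left, hw1, mul_one]
    exact hV.tsum_ofReal
  have hQ0 : ∀ y, 0 ≤ outDistX PX W y := fun y =>
    tsum_nonneg fun x => mul_nonneg (hX.1 _) ((hW _).1 _)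
  have hE0 : 0 ≤ errProb PV W φ ψ :=
    tsum_nonneg fun v => mul_nonneg (hV.1 _) (prob_nonneg (hW _).1 _)
  set E : ℝ≥0∞ := ENNReal.ofReal (Real.exp (-(n * (z - b)))) with hE
  -- the three identities
  have T1 : ENNReal.ofReal (prob PV A) = ∑' v, ∑' y, if v ∈ A then P v * w (φ v) y else 0 := by
    rw [ofReal_prob hV.1 hV.2.summable]
    refine tsum_congr fun v => ?_
    by_cases h : v ∈ A
    · simp only [h, if_true, ENNReal.tsum_mul_left, hw1, mul_one, Set.indicator_of_mem, hP]
    · simp [h]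
  have T2 : ENNReal.ofReal (prob (jointXY PX W) B) =
      ∑' v, ∑' y, if (φ v, y) ∈ B then P v * w (φ v) y else 0 := by
    rw [ofReal_prob hJ.1 hJ.2.summable, ENNReal.tsum_prod']
    have := tsum_push hV φ (fun x => ∑' y, if (x, y) ∈ B then w x y else 0)
    simp only [← ENNReal.tsum_mul_left, mul_ite, mul_zero] at this
    rw [← this]
    refine tsum_congr fun x => tsum_congr fun y => ?_
    simp only [Set.indicator, jointXY, hw, ENNReal.ofReal_mul (hX.1 x)]
    rfl
  have T3 : ENNReal.ofReal (errProb PV W φ ψ) =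
      ∑' v, ∑' y, if ψ y ≠ v then P v * w (φ v) y else 0 := by
    unfold errProb
    rw [ENNReal.ofReal_tsum_of_nonneg (fun v => mul_nonneg (hV.1 _) (prob_nonneg (hW _).1 _))]
    · refine tsum_congr fun v => ?_
      rw [ENNReal.ofReal_mul (hV.1 _), ofReal_prob (hW _).1 (hW _).2.summable,
        ← ENNReal.tsum_mul_left]
      refine tsum_congr fun y => ?_
      by_cases h : ψ y = v <;> simp [h, hP, hw]
    · exact hV.2.summable.of_nonneg_of_le
        (fun v => mul_nonneg (hV.1 _) (prob_nonneg (hW _).1 _))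
        (fun v => mul_le_of_le_one_right (hV.1 _) ((hW _).prob_le_one _))
  have T0 : ∑' v, ∑' y, (if ψ y = v then E * Q y else 0) = E := by
    rw [ENNReal.tsum_comm]
    simp only [tsum_ite_eq', ENNReal.tsum_mul_left, hQ1, mul_one]
  have main : ∀ v y, (if v ∈ A then P v * w (φ v) y else 0) ≤
      (if ψ y = v then E * Q y else 0) + (if (φ v, y) ∈ B then P v * w (φ v) y else 0) +
      (if ψ y ≠ v then P v * w (φ v) y else 0) := by
    intro v y
    by_cases hvA : v ∈ A
    swap
    · simp [hvA]
    by_cases hvB : (φ v, y) ∈ B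
    · simp only [hvA, hvB, if_true]
      exact le_add_right le_add_self
    by_cases hvC : ψ y = v
    swap
    · simp only [hvA, hvC, if_true, ne_eq, not_false_eq_true]
      exact le_add_self
    simp only [hvA, hvB, hvC, if_true, if_false, ne_eq, not_true_eq_false, add_zero]
    by_cases hz : P v * w (φ v) y = 0
    · rw [hz]; exact zero_le
    have hpos : 0 < P v * w (φ v) y := pos_iff_ne_zero.2 hz
    have hQpos : 0 < Q y := by
      rw [hQ']
      exact lt_of_lt_of_le hpos (ENNReal.le_tsum (f := fun v => P v * w (φ v) y) v)
    have hp : 0 < PV v := by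
      by_contra h
      exact hz (by simp [hP, ENNReal.ofReal_of_nonpos (not_lt.1 h)])
    have hw' : 0 < W (φ v) y := by
      by_contra h
      exact hz (by simp [hw, ENNReal.ofReal_of_nonpos (not_lt.1 h)])
    have hq : 0 < outDistX PX W y := ENNReal.ofReal_pos.1 hQpos
    have hn' : (0 : ℝ) < n := by exact_mod_cast hn
    have a1 : z < (1 / (n : ℝ)) * Real.log (1 / PV v) := hvA
    have a2 : (1 / (n : ℝ)) * Real.log (W (φ v) y / outDistX PX W y) ≤ b := not_lt.1 hvB
    rw [one_div_mul_eq_div, lt_div_iff₀ hn', one_div, Real.log_inv] at a1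
    rw [one_div_mul_eq_div, div_le_iff₀ hn', Real.log_div hw'.ne' hq.ne'] at a2
    have : PV v * W (φ v) y ≤ Real.exp (-(n * (z - b))) * outDistX PX W y := by
      rw [← Real.log_le_log_iff (mul_pos hp hw') (mul_pos (Real.exp_pos _) hq),
        Real.log_mul hp.ne' hw'.ne', Real.log_mul (Real.exp_pos _).ne' hq.ne', Real.log_exp]
      nlinarith
    simp only [hP, hw, hE, hQ]
    rw [← ENNReal.ofReal_mul hp.le, ← ENNReal.ofReal_mul (Real.exp_pos _).le]
    exact ENNReal.ofReal_le_ofReal this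
  have hsum : 0 ≤ Real.exp (-(n * (z - b))) + prob (jointXY PX W) B :=
    add_nonneg (Real.exp_pos _).le (prob_nonneg hJ.1 _)
  rw [← ENNReal.ofReal_le_ofReal_iff (add_nonneg hsum hE0), ENNReal.ofReal_add hsum hE0,
    ENNReal.ofReal_add (Real.exp_pos _).le (prob_nonneg hJ.1 _), T1, T2, T3, ← hE]
  calc _ ≤ _ := ENNReal.tsum_le_tsum fun v => ENNReal.tsum_le_tsum fun y => main v y
    _ = _ := by
      simp only [ENNReal.tsum_add]
      rw [T0]

theorem Hbar_le_Ihigh {𝒱 𝒳 𝒴 : Type*}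
    (PV : (n : ℕ) → Word 𝒱 n → ℝ) (hPV : ∀ n, IsPMF (PV n))
    (W : (n : ℕ) → Word 𝒳 n → Word 𝒴 n → ℝ) (hW : ∀ n x, IsPMF (W n x))
    (φ : (n : ℕ) → Word 𝒱 n → Word 𝒳 n) (ψ : (n : ℕ) → Word 𝒴 n → Word 𝒱 n)
    (h : Tendsto (fun n => errProb (PV n) (W n) (φ n) (ψ n)) atTop (nhds 0)) :
    Hbar PV ≤ Ihigh (fun n => pushPMF (PV n) (φ n)) W := by
  unfold Ihigh plimsup
  refine le_sInf fun β hβ => ?_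
  simp only [Set.mem_setOf_eq] at hβ
  refine EReal.le_of_forall_lt_iff_le.1 fun z hz => ?_
  obtain ⟨b, hb1, hb2⟩ := EReal.lt_iff_exists_real_btwn.1 hz
  have hbz : b < z := by exact_mod_cast hb2
  refine sInf_le ?_
  simp only [Set.mem_setOf_eq, EReal.coe_lt_coe_iff]
  have hexp : Tendsto (fun n : ℕ => Real.exp (-(n * (z - b)))) atTop (nhds 0) := by
    refine Real.tendsto_exp_neg_atTop_nhds_zero.comp ?_
    exact tendsto_natCast_atTop_atTop.atTop_mul_const (sub_pos.2 hbz)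
  have hlim := (hexp.add hβ).add h
  simp only [add_zero] at hlim
  refine tendsto_of_tendsto_of_tendsto_of_le_of_le' tendsto_const_nhds hlim
    (Eventually.of_forall fun n => prob_nonneg (hPV n).1 _) ?_
  filter_upwards [eventually_gt_atTop 0] with n hn
  refine (key_bound hn (hPV n) (hW n) (φ n) (ψ n) b z).trans ?_
  have hJ := isPMF_joint (isPMF_push (hPV n) (φ n)) (hW n)
  gcongr
  refine prob_mono hJ.1 hJ.2.summable fun a ha => ?_
  exact hb1.trans (EReal.coe_lt_coe_iff.2 ha)

/-- **Separation theorem, converse part under the channel strong converse property**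
(Theorem 6.5, part 2, channel version, spectral form). -/
theorem separation_converse_channel_strong_converse
    {𝒱 𝒳 𝒴 : Type} [Countable 𝒱] [Countable 𝒳] [Countable 𝒴]
    (PV : (n : ℕ) → Word 𝒱 n → ℝ) (hPV : ∀ n, IsPMF (PV n))
    (W : (n : ℕ) → Word 𝒳 n → Word 𝒴 n → ℝ) (hW : ∀ n x, IsPMF (W n x))
    (hsc : supIlow W =
      ⨆ PX : {PX : (n : ℕ) → Word 𝒳 n → ℝ // ∀ n, IsPMF (PX n)}, Ihigh PX.1 W)
    (htrans : Transmissible PV W) :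
    Hbar PV ≤ supIlow W := by
  obtain ⟨φ, ψ, h⟩ := htrans
  rw [hsc]
  exact (Hbar_le_Ihigh PV hPV W hW φ ψ h).trans
    (le_iSup (fun PX : {PX : (n : ℕ) → Word 𝒳 n → ℝ // ∀ n, IsPMF (PX n)} => Ihigh PX.1 W)
      ⟨fun n => pushPMF (PV n) (φ n), fun n => isPMF_push (hPV n) (φ n)⟩)

end ISC
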